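/- arXiv:1502.02877 — 4 statements merged into one kernel-verified Lean document; each statement's English description precedes it below -/
import Mathlib

section
/- Let α, J, Y be arbitrary real numbers and define f(β) = (cos β)·J − (sin β)·Y for β ∈ ℝ. Then f(α)² − f(α−1)·f(α+1) = sin²(1)·(J² + Y²). In particular, this 'Turánian with respect to the parameter α' is strictly positive whenever (J,Y) ≠ (0,0), and is independent of α. -/
/-!
A shift of the parameter by `h` rotates the pair `(f α, f (α - π / 2))` by the angle `h`.
Hence the sum of squares of this pair does not depend on `α`, so it equals its value
`J ^ 2 + Y ^ 2` at `α = 0`, and with `x = f α` and `y = f (α - π / 2)` the Turánian is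
`x ^ 2 - (cos h * x + sin h * y) * (cos h * x - sin h * y) = sin h ^ 2 * (x ^ 2 + y ^ 2)`.
-/

open Real

theorem sq_add_sq_pos_of_ne_zero {R : Type*} [Ring R] [LinearOrder R] [IsStrictOrderedRing R]
    {x y : R} (hxy : (x, y) ≠ (0, 0)) : 0 < x ^ 2 + y ^ 2 := by
  have hne : x ≠ 0 ∨ y ≠ 0 := by simpa [imp_iff_not_or] using hxy
  rcases hne with hx | hy
  · exact add_pos_of_pos_of_nonneg (sq_pos_of_ne_zero hx) (sq_nonneg y)
  · exact add_pos_of_nonneg_of_pos (sq_nonneg x) (sq_pos_of_ne_zero hy)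

/-- The general Bessel function `C_{ν,α}(x)` as a function of its parameter `α`. The order `ν` and
the argument `x` enter only through the values `J = J_ν(x)` and `Y = Y_ν(x)`. -/
noncomputable def cylinder (J Y α : ℝ) : ℝ :=
  cos α * J - sin α * Y

section cylinder

variable (J Y α h : ℝ)

theorem cylinder_sub_pi_div_two : cylinder J Y (α - π / 2) = sin α * J + cos α * Y := by
  simp [cylinder, cos_sub_pi_div_two, sin_sub_pi_div_two]

theorem cylinder_add :
    cylinder J Y (α + h) = cos h * cylinder J Y α - sin h * cylinder J Y (α - π / 2) := by
  rw [cylinder_sub_pi_div_two, cylinder, cylinder, cos_add, sin_add]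
  ring

theorem cylinder_sub :
    cylinder J Y (α - h) = cos h * cylinder J Y α + sin h * cylinder J Y (α - π / 2) := by
  rw [sub_eq_add_neg α h, cylinder_add, cos_neg, sin_neg, neg_mul, sub_neg_eq_add]

theorem cylinder_sq_add_cylinder_sub_pi_div_two_sq :
    cylinder J Y α ^ 2 + cylinder J Y (α - π / 2) ^ 2 = J ^ 2 + Y ^ 2 := by
  rw [cylinder_sub_pi_div_two, cylinder]
  linear_combination (J ^ 2 + Y ^ 2) * sin_sq_add_cos_sq α

theorem cylinder_sq_sub_cylinder_sub_mul_cylinder_add :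
    cylinder J Y α ^ 2 - cylinder J Y (α - h) * cylinder J Y (α + h) =
      sin h ^ 2 * (J ^ 2 + Y ^ 2) := by
  set x := cylinder J Y α with hx
  set y := cylinder J Y (α - π / 2) with hy
  calc x ^ 2 - cylinder J Y (α - h) * cylinder J Y (α + h)
      = x ^ 2 - (cos h * x + sin h * y) * (cos h * x - sin h * y) := by
        rw [cylinder_sub, cylinder_add]
    _ = sin h ^ 2 * (x ^ 2 + y ^ 2) := by
        linear_combination -x ^ 2 * sin_sq_add_cos_sq h
    _ = sin h ^ 2 * (J ^ 2 + Y ^ 2) := by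
        rw [hx, hy, cylinder_sq_add_cylinder_sub_pi_div_two_sq]

end cylinder

theorem turanian_in_alpha_general (α h J Y : ℝ)
    (f : ℝ → ℝ) (hf : ∀ β, f β = cos β * J - sin β * Y) :
    f α ^ 2 - f (α - h) * f (α + h) = sin h ^ 2 * (J ^ 2 + Y ^ 2) ∧
    (sin h ≠ 0 → (J, Y) ≠ (0, 0) → 0 < f α ^ 2 - f (α - h) * f (α + h)) := by
  obtain rfl : f = cylinder J Y := funext hf
  have turanian_eq := cylinder_sq_sub_cylinder_sub_mul_cylinder_add J Y α h
  refine ⟨turanian_eq, fun hh hJY => ?_⟩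
  rw [turanian_eq]
  exact mul_pos (sq_pos_of_ne_zero hh) (sq_add_sq_pos_of_ne_zero hJY)

/-- The Turánian of the general Bessel function with respect to the parameter α:
for `f β = (cos β)·J − (sin β)·Y`, one has
`f α ² − f (α−1)·f (α+1) = sin²(1)·(J² + Y²)`, which is strictly positive
whenever `(J, Y) ≠ (0, 0)`, and is independent of `α`. -/
theorem turanian_in_alpha (α J Y : ℝ)
    (f : ℝ → ℝ) (hf : ∀ β, f β = Real.cos β * J - Real.sin β * Y) :
    f α ^ 2 - f (α - 1) * f (α + 1) = Real.sin 1 ^ 2 * (J ^ 2 + Y ^ 2) ∧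
    ((J, Y) ≠ (0, 0) → 0 < f α ^ 2 - f (α - 1) * f (α + 1)) := by
  have sin_one_ne_zero : sin 1 ≠ 0 := (sin_pos_of_pos_of_le_one one_pos le_rfl).ne'
  exact (turanian_in_alpha_general α 1 J Y f hf).imp_right fun hpos => hpos sin_one_ne_zero
end

section
/- Let ν > 0 and let a, c, b : ℝ → ℝ be differentiable on (0,∞) satisfying, for all x > 0: c'(x) = a(x) − (ν/x)c(x), c'(x) = −b(x) + (ν/x)c(x), a'(x) = −c(x) + ((ν−1)/x)a(x), and b'(x) = c(x) − ((ν+1)/x)b(x). If x₀ > 0 and a(x₀) = 0, then the Turánian Δ(x) = c(x)² − a(x)b(x) is twice differentiable at x₀ and Δ''(x₀) = −(4ν/x₀²)·c(x₀)² ≤ 0; in particular Δ''(x₀) < 0 if c(x₀) ≠ 0, so every zero of a at which c does not vanish is a strict relative maximum of Δ. -/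
/-! The two derivative rules for the middle function `c = C_ν` average to `2c' = a - b` and subtract
to the three-term recurrence `a + b = (2ν/x) c`. The first collapses the derivative of the Turánian
to `Δ' = 2ab/x`, so every zero of `a` is a critical point, and there the recurrence turns
`Δ'' = 2c(a - b)/x - 6ab/x²` into `-4νc²/x²`. -/

open Filter Set Topology

section StrictDerivativeTest

variable {f : ℝ → ℝ} {x₀ : ℝ}

lemma eventually_nhdsLT_lt_of_deriv_pos (hf : ContinuousAt f x₀)
    (hpos : ∀ᶠ x in 𝓝[<] x₀, 0 < deriv f x) : ∀ᶠ x in 𝓝[<] x₀, f x < f x₀ := by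
  obtain ⟨l, hl, hpos⟩ := (nhdsLT_basis x₀).eventually_iff.mp hpos
  have hcont : ContinuousOn f (Ioc l x₀) := fun x hx ↦ by
    rcases hx.2.eq_or_lt with rfl | hlt
    · exact hf.continuousWithinAt
    · exact (differentiableAt_of_deriv_ne_zero
        (hpos ⟨hx.1, hlt⟩).ne').continuousAt.continuousWithinAt
  have hmono : StrictMonoOn f (Ioc l x₀) :=
    strictMonoOn_of_deriv_pos (convex_Ioc l x₀) hcont fun x hx ↦ hpos (by rwa [interior_Ioc] at hx)
  filter_upwards [Ioo_mem_nhdsLT hl] with x hx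
  exact hmono (Ioo_subset_Ioc_self hx) (right_mem_Ioc.mpr hl) hx.2

lemma eventually_nhdsGT_lt_of_deriv_neg (hf : ContinuousAt f x₀)
    (hneg : ∀ᶠ x in 𝓝[>] x₀, deriv f x < 0) : ∀ᶠ x in 𝓝[>] x₀, f x < f x₀ := by
  obtain ⟨r, hr, hneg⟩ := (nhdsGT_basis x₀).eventually_iff.mp hneg
  have hcont : ContinuousOn f (Ico x₀ r) := fun x hx ↦ by
    rcases hx.1.eq_or_lt with rfl | hlt
    · exact hf.continuousWithinAt
    · exact (differentiableAt_of_deriv_ne_zero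
        (hneg ⟨hlt, hx.2⟩).ne).continuousAt.continuousWithinAt
  have hanti : StrictAntiOn f (Ico x₀ r) :=
    strictAntiOn_of_deriv_neg (convex_Ico x₀ r) hcont fun x hx ↦ hneg (by rwa [interior_Ico] at hx)
  filter_upwards [Ioo_mem_nhdsGT hr] with x hx
  exact hanti (left_mem_Ico.mpr hr) (Ioo_subset_Ico_self hx) hx.1

theorem eventually_nhdsNE_lt_of_deriv_deriv_neg (hf : ContinuousAt f x₀) (hf' : deriv f x₀ = 0)
    (hf'' : deriv (deriv f) x₀ < 0) : ∀ᶠ x in 𝓝[≠] x₀, f x < f x₀ := by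
  have hsign : ∀ᶠ x in 𝓝[≠] x₀, SignType.sign (deriv f x) = SignType.sign (x₀ - x) :=
    nhdsWithin_le_nhds (eventually_nhdsWithin_sign_eq_of_deriv_neg hf'' hf')
  rw [← nhdsLT_sup_nhdsGT, eventually_sup]
  exact ⟨eventually_nhdsLT_lt_of_deriv_pos hf (deriv_pos_left_of_sign_deriv hsign),
    eventually_nhdsGT_lt_of_deriv_neg hf (deriv_neg_right_of_sign_deriv hsign)⟩

end StrictDerivativeTest

/-- The Turánian `c² - ab` of three functions `a, c, b`, listed in increasing order of index:
for `a = C_{ν-1}`, `c = C_ν`, `b = C_{ν+1}` it is `Δ_ν`. -/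
def turanian (a c b : ℝ → ℝ) : ℝ → ℝ := fun x ↦ c x ^ 2 - a x * b x

/-- The recurrences of cylinder functions at the point `x`, with `a, c, b` in the roles of
`C_{ν-1}, C_ν, C_{ν+1}`. Only those relations that do not involve `C_{ν-2}` or `C_{ν+2}` are
imposed. -/
structure IsCylinderTripleAt (ν : ℝ) (a c b : ℝ → ℝ) (x : ℝ) : Prop where
  hasDerivAt_mid_left : HasDerivAt c (a x - (ν / x) * c x) x
  hasDerivAt_mid_right : HasDerivAt c (-b x + (ν / x) * c x) x
  hasDerivAt_left : HasDerivAt a (-c x + ((ν - 1) / x) * a x) x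
  hasDerivAt_right : HasDerivAt b (c x - ((ν + 1) / x) * b x) x

namespace IsCylinderTripleAt

variable {ν x x₀ : ℝ} {a c b : ℝ → ℝ}

lemma left_add_right (h : IsCylinderTripleAt ν a c b x) : a x + b x = 2 * ν / x * c x := by
  linear_combination h.hasDerivAt_mid_left.unique h.hasDerivAt_mid_right

lemma hasDerivAt_mid (h : IsCylinderTripleAt ν a c b x) : HasDerivAt c ((a x - b x) / 2) x :=
  h.hasDerivAt_mid_left.congr_deriv (by linear_combination h.left_add_right / 2)

lemma hasDerivAt_turanian (h : IsCylinderTripleAt ν a c b x) :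
    HasDerivAt (turanian a c b) (2 * (a x * b x) / x) x :=
  ((h.hasDerivAt_mid.fun_pow 2).fun_sub
    (h.hasDerivAt_left.fun_mul h.hasDerivAt_right)).congr_deriv (by push_cast; ring)

lemma hasDerivAt_deriv_turanian (h : ∀ᶠ x in 𝓝 x₀, IsCylinderTripleAt ν a c b x) (hx₀ : x₀ ≠ 0) :
    HasDerivAt (deriv (turanian a c b))
      (2 * c x₀ * (a x₀ - b x₀) / x₀ - 6 * (a x₀ * b x₀) / x₀ ^ 2) x₀ := by
  have hderiv : deriv (turanian a c b) =ᶠ[𝓝 x₀] fun x ↦ 2 * (a x * b x) / x :=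
    h.mono fun x hx ↦ hx.hasDerivAt_turanian.deriv
  have h₀ := h.self_of_nhds
  have hquot := ((h₀.hasDerivAt_left.fun_mul h₀.hasDerivAt_right).const_mul 2).fun_div
    (hasDerivAt_id' x₀) hx₀
  refine (hquot.congr_deriv ?_).congr_of_eventuallyEq hderiv
  field_simp
  ring

lemma hasDerivAt_deriv_turanian_of_left_eq_zero
    (h : ∀ᶠ x in 𝓝 x₀, IsCylinderTripleAt ν a c b x) (hx₀ : x₀ ≠ 0) (ha₀ : a x₀ = 0) :
    HasDerivAt (deriv (turanian a c b)) (-(4 * ν / x₀ ^ 2) * c x₀ ^ 2) x₀ := by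
  have hb₀ : b x₀ = 2 * ν / x₀ * c x₀ := by
    simpa only [ha₀, zero_add] using h.self_of_nhds.left_add_right
  refine (hasDerivAt_deriv_turanian h hx₀).congr_deriv ?_
  rw [ha₀, hb₀]
  ring

end IsCylinderTripleAt

theorem turanian_max_at_zero_of_a_general {ν x₀ : ℝ} {a c b : ℝ → ℝ} (hν : 0 < ν)
    (h : ∀ᶠ x in 𝓝 x₀, IsCylinderTripleAt ν a c b x) (hx₀ : x₀ ≠ 0) (ha₀ : a x₀ = 0) :
    DifferentiableAt ℝ (deriv (turanian a c b)) x₀ ∧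
    deriv (deriv (turanian a c b)) x₀ = -(4 * ν / x₀ ^ 2) * c x₀ ^ 2 ∧
    deriv (deriv (turanian a c b)) x₀ ≤ 0 ∧
    (c x₀ ≠ 0 →
      deriv (deriv (turanian a c b)) x₀ < 0 ∧
      ∃ ε > 0, ∀ x ∈ Ioo (x₀ - ε) (x₀ + ε), x ≠ x₀ →
        turanian a c b x < turanian a c b x₀) := by
  have hΔ : HasDerivAt (turanian a c b) 0 x₀ := by
    simpa only [ha₀, zero_mul, mul_zero, zero_div] using h.self_of_nhds.hasDerivAt_turanian
  have hΔ' : HasDerivAt (deriv (turanian a c b)) (-(4 * ν / x₀ ^ 2) * c x₀ ^ 2) x₀ :=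
    IsCylinderTripleAt.hasDerivAt_deriv_turanian_of_left_eq_zero h hx₀ ha₀
  have hcoeff : -(4 * ν / x₀ ^ 2) < 0 := neg_neg_of_pos (by positivity)
  refine ⟨hΔ'.differentiableAt, hΔ'.deriv,
    hΔ'.deriv.trans_le (mul_nonpos_of_nonpos_of_nonneg hcoeff.le (sq_nonneg _)), fun hc₀ ↦ ?_⟩
  have hneg : deriv (deriv (turanian a c b)) x₀ < 0 :=
    hΔ'.deriv.trans_lt (mul_neg_of_neg_of_pos hcoeff (sq_pos_of_ne_zero hc₀))
  have hmax : ∀ᶠ x in 𝓝[≠] x₀, turanian a c b x < turanian a c b x₀ :=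
    eventually_nhdsNE_lt_of_deriv_deriv_neg hΔ.continuousAt hΔ.deriv hneg
  exact ⟨hneg, (nhds_basis_Ioo_pos x₀).eventually_iff.mp (eventually_nhdsWithin_iff.mp hmax)⟩

/-- If `a, c, b` satisfy the cylinder-function recurrence system on `(0,∞)`,
`ν > 0`, `x₀ > 0` and `a(x₀) = 0`, then the Turánian `Δ(x) = c(x)² − a(x)b(x)`
is twice differentiable at `x₀` with `Δ''(x₀) = −(4ν/x₀²)·c(x₀)² ≤ 0`;
if moreover `c(x₀) ≠ 0` then `Δ''(x₀) < 0` and `x₀` is a strict relative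
maximum of `Δ`. -/
theorem turanian_max_at_zero_of_a (ν : ℝ) (hν : 0 < ν) (a c b : ℝ → ℝ)
    (hc : ∀ x, 0 < x → HasDerivAt c (a x - (ν / x) * c x) x)
    (hc' : ∀ x, 0 < x → HasDerivAt c (-b x + (ν / x) * c x) x)
    (ha : ∀ x, 0 < x → HasDerivAt a (-c x + ((ν - 1) / x) * a x) x)
    (hb : ∀ x, 0 < x → HasDerivAt b (c x - ((ν + 1) / x) * b x) x)
    (x₀ : ℝ) (hx₀ : 0 < x₀) (ha₀ : a x₀ = 0) :
    DifferentiableAt ℝ (deriv (fun x => c x ^ 2 - a x * b x)) x₀ ∧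
    deriv (deriv (fun x => c x ^ 2 - a x * b x)) x₀ = -(4 * ν / x₀ ^ 2) * c x₀ ^ 2 ∧
    deriv (deriv (fun x => c x ^ 2 - a x * b x)) x₀ ≤ 0 ∧
    (c x₀ ≠ 0 →
      deriv (deriv (fun x => c x ^ 2 - a x * b x)) x₀ < 0 ∧
      ∃ ε > 0, ∀ x ∈ Set.Ioo (x₀ - ε) (x₀ + ε), x ≠ x₀ →
        c x ^ 2 - a x * b x < c x₀ ^ 2 - a x₀ * b x₀) :=
  turanian_max_at_zero_of_a_general hν ((eventually_gt_nhds hx₀).mono fun x hx ↦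
    ⟨hc x hx, hc' x hx, ha x hx, hb x hx⟩) hx₀.ne' ha₀
end

section
/- Let ν > 0 and let Φ₋, Φ, Φ₊ : ℝ → ℝ with Φ twice differentiable and Φ₋, Φ₊ differentiable on (0,∞), satisfying for all x > 0: Φ₋'(x) = −xΦ(x)/(2ν), Φ'(x) = −xΦ₊(x)/(2(ν+1)), Φ'(x) = (2ν/x)(Φ₋(x) − Φ(x)), Φ₊'(x) = (2(ν+1)/x)(Φ(x) − Φ₊(x)), and the differential equation x²Φ''(x) + (2ν+1)xΦ'(x) + x²Φ(x) = 0. Define Θ(x) = Φ(x)² − Φ₋(x)Φ₊(x). If x₀ > 0 and Φ'(x₀) = 0, then the second derivative of x ↦ x^(2ν+2)Θ(x) at x₀ equals (2/ν)·x₀^(2ν+2)·Φ(x₀)², which is strictly positive when Φ(x₀) ≠ 0. -/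
/-!
The derivative relations combine to `(x^(2ν+2) Θ)' = x^(2ν+3) Φ Φ₊ / (ν(ν+1))`. The derivative of
`Φ` is a multiple of `x Φ₊`, so `Φ₊` vanishes at a stationary point of `Φ`; there the only term of
the second derivative that survives is the one containing `Φ₊' = 2(ν+1) Φ / x`.
-/

/-- The Turánian `Θ = Φ² - Φ₋Φ₊` multiplied by the weight `x^(2ν+2)`, for arbitrary functions
`Φm`, `Φ`, `Φp` in the roles of the normalized cylinder functions of orders `ν-1`, `ν`, `ν+1`. -/
noncomputable def weightedTuranian (ν : ℝ) (Φm Φ Φp : ℝ → ℝ) (x : ℝ) : ℝ :=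
  x ^ (2 * ν + 2) * (Φ x ^ 2 - Φm x * Φp x)

section CylinderRelations

variable {ν x : ℝ} {Φm Φ Φp : ℝ → ℝ}

theorem sq_mul_cylinder_succ_eq (hν₁ : ν + 1 ≠ 0) (hx : x ≠ 0)
    (hΦ : HasDerivAt Φ (-(x * Φp x) / (2 * (ν + 1))) x)
    (hΦ' : deriv Φ x = (2 * ν / x) * (Φm x - Φ x)) :
    x ^ 2 * Φp x = 4 * ν * (ν + 1) * (Φ x - Φm x) := by
  have h : -(x * Φp x) / (2 * (ν + 1)) = (2 * ν / x) * (Φm x - Φ x) := hΦ.deriv.symm.trans hΦ'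
  field_simp at h
  linear_combination -h

theorem deriv_cylinder_eq_zero_iff (hν₁ : ν + 1 ≠ 0) (hx : x ≠ 0)
    (hΦ : HasDerivAt Φ (-(x * Φp x) / (2 * (ν + 1))) x) :
    deriv Φ x = 0 ↔ Φp x = 0 := by
  simp [hΦ.deriv, hν₁, hx]

theorem hasDerivAt_weightedTuranian (hν : ν ≠ 0) (hν₁ : ν + 1 ≠ 0) (hx : x ≠ 0)
    (hΦm : HasDerivAt Φm (-(x * Φ x) / (2 * ν)) x)
    (hΦ : HasDerivAt Φ (-(x * Φp x) / (2 * (ν + 1))) x)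
    (hΦ' : deriv Φ x = (2 * ν / x) * (Φm x - Φ x))
    (hΦp : HasDerivAt Φp ((2 * (ν + 1) / x) * (Φ x - Φp x)) x) :
    HasDerivAt (weightedTuranian ν Φm Φ Φp)
      (x ^ (2 * ν + 3) * (Φ x * Φp x) / (ν * (ν + 1))) x := by
  have hΦm_eq : Φm x = Φ x - x ^ 2 * Φp x / (4 * ν * (ν + 1)) := by
    rw [sq_mul_cylinder_succ_eq hν₁ hx hΦ hΦ']
    field_simp
    ring
  have hpow_add : x ^ (2 * ν + 3) = x ^ (2 * ν + 2) * x := by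
    rw [← Real.rpow_add_one hx]
    congr 1
    ring
  have hpow_sub : x ^ (2 * ν + 2 - 1) = x ^ (2 * ν + 2) / x := Real.rpow_sub_one hx _
  have hweight := Real.hasDerivAt_rpow_const (p := 2 * ν + 2) (Or.inl hx)
  refine (hweight.mul ((hΦ.pow 2).sub (hΦm.mul hΦp))).congr_deriv ?_
  simp only [Pi.sub_apply, Pi.mul_apply, Pi.pow_apply, hpow_add, hpow_sub, hΦm_eq]
  field_simp
  push_cast
  ring

theorem hasDerivAt_rpow_mul_cylinder_mul_succ (p : ℝ) (hν₁ : ν + 1 ≠ 0) (hx : x ≠ 0)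
    (hΦ : HasDerivAt Φ (-(x * Φp x) / (2 * (ν + 1))) x)
    (hΦp : HasDerivAt Φp ((2 * (ν + 1) / x) * (Φ x - Φp x)) x) :
    HasDerivAt (fun y => y ^ p * (Φ y * Φp y))
      (x ^ (p - 1) * (2 * (ν + 1) * Φ x ^ 2 + (p - 2 * (ν + 1)) * (Φ x * Φp x) -
        x ^ 2 * Φp x ^ 2 / (2 * (ν + 1)))) x := by
  have hweight := Real.hasDerivAt_rpow_const (p := p) (Or.inl hx)
  refine (hweight.mul (hΦ.mul hΦp)).congr_deriv ?_
  simp only [Pi.mul_apply, Real.rpow_sub_one hx]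
  field_simp
  ring

theorem deriv_deriv_weightedTuranian (hν : ν ≠ 0) (hν₁ : ν + 1 ≠ 0)
    (hΦm : ∀ y, 0 < y → HasDerivAt Φm (-(y * Φ y) / (2 * ν)) y)
    (hΦ : ∀ y, 0 < y → HasDerivAt Φ (-(y * Φp y) / (2 * (ν + 1))) y)
    (hΦ' : ∀ y, 0 < y → deriv Φ y = (2 * ν / y) * (Φm y - Φ y))
    (hΦp : ∀ y, 0 < y → HasDerivAt Φp ((2 * (ν + 1) / y) * (Φ y - Φp y)) y)
    (hx : 0 < x) :
    deriv (deriv (weightedTuranian ν Φm Φ Φp)) x =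
      x ^ (2 * ν + 2) *
        (2 * (ν + 1) * Φ x ^ 2 + Φ x * Φp x - x ^ 2 * Φp x ^ 2 / (2 * (ν + 1))) /
          (ν * (ν + 1)) := by
  have hderiv : deriv (weightedTuranian ν Φm Φ Φp) =ᶠ[nhds x]
      fun y => y ^ (2 * ν + 3) * (Φ y * Φp y) / (ν * (ν + 1)) := by
    filter_upwards [lt_mem_nhds hx] with y hy
    exact (hasDerivAt_weightedTuranian hν hν₁ hy.ne'
      (hΦm y hy) (hΦ y hy) (hΦ' y hy) (hΦp y hy)).deriv
  rw [hderiv.deriv_eq]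
  have hprod := hasDerivAt_rpow_mul_cylinder_mul_succ (2 * ν + 3) hν₁ hx.ne' (hΦ x hx) (hΦp x hx)
  refine (hprod.div_const _).deriv.trans ?_
  have hexponent : 2 * ν + 3 - 1 = 2 * ν + 2 := by ring
  have hcoeff : 2 * ν + 3 - 2 * (ν + 1) = 1 := by ring
  rw [hexponent, hcoeff, one_mul]

end CylinderRelations

theorem weighted_turanian_min_general (ν : ℝ) (hν : ν ≠ 0) (hν₁ : ν + 1 ≠ 0) (Φm Φ Φp : ℝ → ℝ)
    (hΦm : ∀ x, 0 < x → HasDerivAt Φm (-(x * Φ x) / (2 * ν)) x)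
    (hΦ : ∀ x, 0 < x → HasDerivAt Φ (-(x * Φp x) / (2 * (ν + 1))) x)
    (hΦ' : ∀ x, 0 < x → deriv Φ x = (2 * ν / x) * (Φm x - Φ x))
    (hΦp : ∀ x, 0 < x → HasDerivAt Φp ((2 * (ν + 1) / x) * (Φ x - Φp x)) x)
    (x₀ : ℝ) (hx₀ : 0 < x₀) (hΦ0 : deriv Φ x₀ = 0) :
    deriv (deriv (weightedTuranian ν Φm Φ Φp)) x₀ = (2 / ν) * x₀ ^ (2 * ν + 2) * Φ x₀ ^ 2 ∧
    (Φ x₀ ≠ 0 → (0 < deriv (deriv (weightedTuranian ν Φm Φ Φp)) x₀ ↔ 0 < ν)) := by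
  have hΦp0 : Φp x₀ = 0 := (deriv_cylinder_eq_zero_iff hν₁ hx₀.ne' (hΦ x₀ hx₀)).1 hΦ0
  have hsecond : deriv (deriv (weightedTuranian ν Φm Φ Φp)) x₀ =
      (2 / ν) * x₀ ^ (2 * ν + 2) * Φ x₀ ^ 2 := by
    rw [deriv_deriv_weightedTuranian hν hν₁ hΦm hΦ hΦ' hΦp hx₀, hΦp0]
    field_simp
    ring
  refine ⟨hsecond, fun hne => ?_⟩
  rw [hsecond, mul_pos_iff_of_pos_right (sq_pos_of_ne_zero hne),
    mul_pos_iff_of_pos_right (Real.rpow_pos_of_pos hx₀ _), div_pos_iff_of_pos_left two_pos]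

/-- If the normalized cylinder functions `Φ₋, Φ, Φ₊` satisfy the derivative
relations and `Φ` solves `x²Φ'' + (2ν+1)xΦ' + x²Φ = 0` on `(0,∞)`, and if
`x₀ > 0` with `Φ'(x₀) = 0`, then the second derivative of
`x ↦ x^(2ν+2)Θ(x)` at `x₀`, where `Θ(x) = Φ(x)² − Φ₋(x)Φ₊(x)`, equals
`(2/ν)·x₀^(2ν+2)·Φ(x₀)²`, which is strictly positive when `Φ(x₀) ≠ 0`. -/
theorem weighted_turanian_min (ν : ℝ) (hν : 0 < ν) (Φm Φ Φp : ℝ → ℝ)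
    (hΦ2 : ∀ x, 0 < x → DifferentiableAt ℝ (deriv Φ) x)
    (hΦm : ∀ x, 0 < x → HasDerivAt Φm (-(x * Φ x) / (2 * ν)) x)
    (hΦ : ∀ x, 0 < x → HasDerivAt Φ (-(x * Φp x) / (2 * (ν + 1))) x)
    (hΦ' : ∀ x, 0 < x → deriv Φ x = (2 * ν / x) * (Φm x - Φ x))
    (hΦp : ∀ x, 0 < x → HasDerivAt Φp ((2 * (ν + 1) / x) * (Φ x - Φp x)) x)
    (hode : ∀ x, 0 < x →
      x ^ 2 * deriv (deriv Φ) x + (2 * ν + 1) * x * deriv Φ x + x ^ 2 * Φ x = 0)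
    (x₀ : ℝ) (hx₀ : 0 < x₀) (hΦ0 : deriv Φ x₀ = 0) :
    deriv (deriv (fun x => x ^ (2 * ν + 2) * (Φ x ^ 2 - Φm x * Φp x))) x₀ =
      (2 / ν) * x₀ ^ (2 * ν + 2) * Φ x₀ ^ 2 ∧
    (Φ x₀ ≠ 0 →
      0 < deriv (deriv (fun x => x ^ (2 * ν + 2) * (Φ x ^ 2 - Φm x * Φp x))) x₀) := by
  have h := weighted_turanian_min_general ν hν.ne' (by positivity) Φm Φ Φp hΦm hΦ hΦ' hΦp x₀ hx₀ hΦ0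
  exact ⟨h.1, fun hne => (h.2 hne).2 hν⟩
end

section
/- Let ν be a real number, let I ⊆ (0,∞) be an open interval, and let c : ℝ → ℝ be twice differentiable on I with c(x) ≠ 0 for all x ∈ I, satisfying x²c''(x) + xc'(x) + (x² − ν²)c(x) = 0 for all x ∈ I. If the Turánian Δ(x) = (1 − ν²/x²)c(x)² + c'(x)² is strictly positive for all x ∈ I, then the function x ↦ x·c'(x)/c(x) is strictly decreasing on I. -/
/-!
In self-adjoint form Bessel's equation reads `(x c')' + (x - ν² / x) c = 0`. For any equation
`(p y')' + q y = 0` the quotient `p y' / y` satisfies the Riccati equation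
`(p y' / y)' = -(q y² + p y'²) / y²`, and for Bessel's equation the numerator `q y² + p y'²` is `x`
times the Turánian `Δ(x)`.
-/

theorem hasDerivWithinAt_mul_deriv_div {𝕜 : Type*} [NontriviallyNormedField 𝕜]
    {p y y' : 𝕜 → 𝕜} {q x : 𝕜} {s : Set 𝕜}
    (hy : HasDerivWithinAt y (y' x) s x)
    (hpy : HasDerivWithinAt (fun t => p t * y' t) (-(q * y x)) s x) (hy0 : y x ≠ 0) :
    HasDerivWithinAt (fun t => p t * y' t / y t)
      (-(q * y x ^ 2 + p x * y' x ^ 2) / y x ^ 2) s x := by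
  refine (hpy.div hy hy0).congr_deriv ?_
  ring

theorem strictAntiOn_mul_deriv_div {p q y y' : ℝ → ℝ} {s : Set ℝ} (hs : Convex ℝ s)
    (hy : ∀ x ∈ s, HasDerivWithinAt y (y' x) s x)
    (hpy : ∀ x ∈ s, HasDerivWithinAt (fun t => p t * y' t) (-(q x * y x)) s x)
    (hy0 : ∀ x ∈ s, y x ≠ 0)
    (hpos : ∀ x ∈ interior s, 0 < q x * y x ^ 2 + p x * y' x ^ 2) :
    StrictAntiOn (fun x => p x * y' x / y x) s := by
  have riccati : ∀ x ∈ s, HasDerivWithinAt (fun t => p t * y' t / y t)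
      (-(q x * y x ^ 2 + p x * y' x ^ 2) / y x ^ 2) s x := fun x hx =>
    hasDerivWithinAt_mul_deriv_div (hy x hx) (hpy x hx) (hy0 x hx)
  refine strictAntiOn_of_hasDerivWithinAt_neg hs
    (fun x hx => (riccati x hx).continuousWithinAt)
    (fun x hx => (riccati x (interior_subset hx)).mono interior_subset) fun x hx => ?_
  have hsq : 0 < y x ^ 2 := sq_pos_of_ne_zero (hy0 x (interior_subset hx))
  exact div_neg_of_neg_of_pos (neg_neg_of_pos (hpos x hx)) hsq

theorem hasDerivWithinAt_mul_deriv_of_bessel {𝕜 : Type*} [NontriviallyNormedField 𝕜]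
    {c c' : 𝕜 → 𝕜} {κ c'' x : 𝕜} {s : Set 𝕜} (hx : x ≠ 0)
    (hc' : HasDerivWithinAt c' c'' s x)
    (hode : x ^ 2 * c'' + x * c' x + (x ^ 2 - κ) * c x = 0) :
    HasDerivWithinAt (fun t => t * c' t) (-((x - κ / x) * c x)) s x := by
  refine ((hasDerivAt_id' x).hasDerivWithinAt.mul hc').congr_deriv ?_
  field_simp
  linear_combination hode

/-- The parameter `κ` replaces `ν²` and may be negative, as it is for Bessel functions of purely
imaginary order. -/
theorem logDeriv_strictAnti_general {κ : ℝ} {I : Set ℝ} (hI : I.OrdConnected)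
    (hIpos : I ⊆ Set.Ioi 0) {c c' c'' : ℝ → ℝ}
    (hc : ∀ x ∈ I, HasDerivWithinAt c (c' x) I x)
    (hc' : ∀ x ∈ I, HasDerivWithinAt c' (c'' x) I x)
    (hc0 : ∀ x ∈ I, c x ≠ 0)
    (hode : ∀ x ∈ I, x ^ 2 * c'' x + x * c' x + (x ^ 2 - κ) * c x = 0)
    (hturan : ∀ x ∈ interior I, 0 < (1 - κ / x ^ 2) * c x ^ 2 + c' x ^ 2) :
    StrictAntiOn (fun x => x * c' x / c x) I := by
  refine strictAntiOn_mul_deriv_div (p := fun x => x) (q := fun x => x - κ / x) hI.convex hc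
    (fun x hx => hasDerivWithinAt_mul_deriv_of_bessel (hIpos hx).ne' (hc' x hx) (hode x hx))
    hc0 fun x hx => ?_
  have hxpos : 0 < x := hIpos (interior_subset hx)
  calc
    0 < x * ((1 - κ / x ^ 2) * c x ^ 2 + c' x ^ 2) := mul_pos hxpos (hturan x hx)
    _ = (x - κ / x) * c x ^ 2 + x * c' x ^ 2 := by field_simp

/-- On an open interval `I ⊆ (0,∞)` where `c` is a nonvanishing, twice
differentiable solution of the Bessel equation and the Turánian
`Δ(x) = (1 − ν²/x²)c(x)² + c'(x)²` is strictly positive, the function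
`x ↦ x·c'(x)/c(x)` is strictly decreasing. -/
theorem logDeriv_strictAnti (ν : ℝ) (I : Set ℝ) (hIopen : IsOpen I)
    (hIint : I.OrdConnected) (hIpos : I ⊆ Set.Ioi 0) (c : ℝ → ℝ)
    (hc1 : ∀ x ∈ I, DifferentiableAt ℝ c x)
    (hc2 : ∀ x ∈ I, DifferentiableAt ℝ (deriv c) x)
    (hc0 : ∀ x ∈ I, c x ≠ 0)
    (hode : ∀ x ∈ I,
      x ^ 2 * deriv (deriv c) x + x * deriv c x + (x ^ 2 - ν ^ 2) * c x = 0)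
    (hturan : ∀ x ∈ I, 0 < (1 - ν ^ 2 / x ^ 2) * c x ^ 2 + (deriv c x) ^ 2) :
    StrictAntiOn (fun x => x * deriv c x / c x) I :=
  logDeriv_strictAnti_general hIint hIpos (fun x hx => (hc1 x hx).hasDerivAt.hasDerivWithinAt)
    (fun x hx => (hc2 x hx).hasDerivAt.hasDerivWithinAt) hc0 hode
    fun x hx => hturan x (interior_subset hx)
end
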